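/- Assume ΣT = 0. Let g ∈ L²([t0,T],ℝᵐ), let (μ̂, ν̂) solve the two-point boundary value problem μ̂' = Fμ̂ - GQG*ν̂, -ν̂' = F*ν̂ + H*R^{-1}Hμ̂ - H*R^{-1}g, μ̂(t0) = -Π0 ν̂(t0), ν̂(T) = 0, and let r solve r'(t) = (F(t) - Π(t)H*(t)R(t)^{-1}H(t)) r(t) + Π(t)H*(t)R(t)^{-1}g(t), r(t0) = 0. Then μ̂(T) = r(T) = ∫_{t0}^T K(T,t|T) H*(t) R(t)^{-1} g(t) dt. -/

import Mathlib

/-!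
Write `B = G Q G*`, `C = H* R⁻¹ H`, `l = H* R⁻¹ g`. Everything reduces to a product rule for
absolutely continuous matrix functions (`MPrim.mul`) and to uniqueness for linear equations with
integrable coefficients (`MPrim.eq_zero`).

* `μ + Π ν - r` solves `e' = (F - Π C) e`, `e(t₀) = 0`, so it vanishes, and `ν(T) = 0` gives
  `μ(T) = r(T)` (`filter_decoupling`).
* Put `A = F - B Σ`, `X(t) = Φ(t,t₀)`, `N = Π₀^{1/2} (I + Π₀^{1/2} Σ(t₀) Π₀^{1/2})⁻¹ Π₀^{1/2}` and
  `D(t) = N + ∫_{t₀}^t X⁻¹ B X⁻¹*`, so that `K(T,t) = X(T) D(t) X(t)*`. With `w = ν - Σ μ`, which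
  satisfies `w' = -A* w + l` and `w(T) = 0`, both `μ + X D X* w` and `X ∫ D X* l` solve
  `z' = A z + X D X* l`, `z(t₀) = 0`; evaluating at `T` gives the kernel formula
  (`kernel_decoupling`). No interchange of integrals is needed.

The initial condition `μ(t₀) = -N w(t₀)` requires `I + Π₀^{1/2} Σ(t₀) Π₀^{1/2}` to be invertible,
which follows from `Σ(t₀) ⪰ 0` (`riccati_posSemidef`, `sqrt_push_through`).
-/


open MeasureTheory Matrix Set Filter

noncomputable section

namespace SDEKernels

/-- Entrywise interval integral of a matrix-valued function. -/
def matInt {ι κ : Type*} (X : ℝ → Matrix ι κ ℝ) (a b : ℝ) : Matrix ι κ ℝ :=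
  Matrix.of fun i j => ∫ τ in a..b, X τ i j

/-- Entrywise continuity of a matrix-valued function on a set. -/
def MatContOn {ι κ : Type*} (X : ℝ → Matrix ι κ ℝ) (s : Set ℝ) : Prop :=
  ∀ i j, ContinuousOn (fun t => X t i j) s

/-- Entrywise interval integrability (matrix-valued `L¹` on `[a,b]`). -/
def MatII {ι κ : Type*} (X : ℝ → Matrix ι κ ℝ) (a b : ℝ) : Prop :=
  ∀ i j, IntervalIntegrable (fun t => X t i j) volume a b

/-- Entrywise square integrability (matrix-valued `L²` on `[a,b]`). -/
def MatL2 {ι κ : Type*} (X : ℝ → Matrix ι κ ℝ) (a b : ℝ) : Prop :=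
  ∀ i j, IntervalIntegrable (fun t => X t i j) volume a b ∧
    IntervalIntegrable (fun t => (X t i j) ^ 2) volume a b

/-- Componentwise square integrability (vector-valued `L²` on `[a,b]`). -/
def VecL2 {ι : Type*} (x : ℝ → ι → ℝ) (a b : ℝ) : Prop :=
  ∀ i, IntervalIntegrable (fun t => x t i) volume a b ∧
    IntervalIntegrable (fun t => (x t i) ^ 2) volume a b

/-- `G(τ) Q(τ) G(τ)*`. -/
def gqg {n d : ℕ} (G : ℝ → Matrix (Fin n) (Fin d) ℝ) (Q : ℝ → Matrix (Fin d) (Fin d) ℝ)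
    (τ : ℝ) : Matrix (Fin n) (Fin n) ℝ := G τ * Q τ * (G τ)ᵀ

/-- `H(τ)* R(τ)⁻¹ H(τ)`. -/
def hrh {n m : ℕ} (H : ℝ → Matrix (Fin m) (Fin n) ℝ) (R : ℝ → Matrix (Fin m) (Fin m) ℝ)
    (τ : ℝ) : Matrix (Fin n) (Fin n) ℝ := (H τ)ᵀ * (R τ)⁻¹ * H τ

/-- `Φ` is the state-transition matrix of `x' = A(s) x` on `[a,b]`, in the
Carathéodory (integral) sense: `Φ(t,t) = I` and `∂ₛ Φ(s,t) = A(s) Φ(s,t)`. -/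
def IsTransition {ι : Type*} [Fintype ι] [DecidableEq ι] (a b : ℝ)
    (A : ℝ → Matrix ι ι ℝ) (Φ : ℝ → ℝ → Matrix ι ι ℝ) : Prop :=
  ∀ t ∈ Icc a b,
    MatContOn (fun s => Φ s t) (Icc a b) ∧
    MatII (fun τ => A τ * Φ τ t) a b ∧
    ∀ s ∈ Icc a b, Φ s t = 1 + matInt (fun τ => A τ * Φ τ t) t s

/-- Carathéodory solution of the backward matrix Riccati equation
`-Σ' = ΣF + F*Σ - Σ G Q G* Σ + H* R⁻¹ H`, `Σ(b) = ST`, on `[a,b]`. -/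
def SolvesBackRiccati {n m d : ℕ} (a b : ℝ) (F : ℝ → Matrix (Fin n) (Fin n) ℝ)
    (G : ℝ → Matrix (Fin n) (Fin d) ℝ) (Q : ℝ → Matrix (Fin d) (Fin d) ℝ)
    (H : ℝ → Matrix (Fin m) (Fin n) ℝ) (R : ℝ → Matrix (Fin m) (Fin m) ℝ)
    (ST : Matrix (Fin n) (Fin n) ℝ) (S : ℝ → Matrix (Fin n) (Fin n) ℝ) : Prop :=
  MatContOn S (Icc a b) ∧
  MatII (fun τ => S τ * F τ + (F τ)ᵀ * S τ - S τ * gqg G Q τ * S τ + hrh H R τ) a b ∧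
  S b = ST ∧
  ∀ t ∈ Icc a b,
    S t = ST + matInt (fun τ => S τ * F τ + (F τ)ᵀ * S τ - S τ * gqg G Q τ * S τ + hrh H R τ) t b

/-- Carathéodory solution of the forward matrix Riccati equation
`Π' = FΠ + ΠF* - Π H* R⁻¹ H Π + G Q G*`, `Π(a) = P0`, on `[a,b]`. -/
def SolvesFwdRiccati {n m d : ℕ} (a b : ℝ) (F : ℝ → Matrix (Fin n) (Fin n) ℝ)
    (G : ℝ → Matrix (Fin n) (Fin d) ℝ) (Q : ℝ → Matrix (Fin d) (Fin d) ℝ)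
    (H : ℝ → Matrix (Fin m) (Fin n) ℝ) (R : ℝ → Matrix (Fin m) (Fin m) ℝ)
    (P0 : Matrix (Fin n) (Fin n) ℝ) (P : ℝ → Matrix (Fin n) (Fin n) ℝ) : Prop :=
  MatContOn P (Icc a b) ∧
  MatII (fun τ => F τ * P τ + P τ * (F τ)ᵀ - P τ * hrh H R τ * P τ + gqg G Q τ) a b ∧
  P a = P0 ∧
  ∀ t ∈ Icc a b,
    P t = P0 + matInt (fun τ => F τ * P τ + P τ * (F τ)ᵀ - P τ * hrh H R τ * P τ + gqg G Q τ) a t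

/-- Carathéodory solution of the perturbed two-point boundary value problem
`μ' = Fμ - GQG*ν + lμ`, `-ν' = F*ν + H*R⁻¹Hμ - lν`, `μ(a) = -P0 ν(a)`, `ν(b) = ST μ(b)`. -/
def SolvesTPBVP {n m d : ℕ} (a b : ℝ) (F : ℝ → Matrix (Fin n) (Fin n) ℝ)
    (G : ℝ → Matrix (Fin n) (Fin d) ℝ) (Q : ℝ → Matrix (Fin d) (Fin d) ℝ)
    (H : ℝ → Matrix (Fin m) (Fin n) ℝ) (R : ℝ → Matrix (Fin m) (Fin m) ℝ)
    (P0 ST : Matrix (Fin n) (Fin n) ℝ) (lμ lν : ℝ → Fin n → ℝ)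
    (μ ν : ℝ → Fin n → ℝ) : Prop :=
  ContinuousOn μ (Icc a b) ∧ ContinuousOn ν (Icc a b) ∧
  IntervalIntegrable (fun τ => (F τ).mulVec (μ τ) - (gqg G Q τ).mulVec (ν τ) + lμ τ) volume a b ∧
  IntervalIntegrable (fun τ => (F τ)ᵀ.mulVec (ν τ) + (hrh H R τ).mulVec (μ τ) - lν τ) volume a b ∧
  (∀ t ∈ Icc a b,
    μ t = μ a + ∫ τ in a..t, ((F τ).mulVec (μ τ) - (gqg G Q τ).mulVec (ν τ) + lμ τ)) ∧
  (∀ t ∈ Icc a b,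
    ν t = ν b + ∫ τ in t..b, ((F τ)ᵀ.mulVec (ν τ) + (hrh H R τ).mulVec (μ τ) - lν τ)) ∧
  μ a = -(P0.mulVec (ν a)) ∧
  ν b = ST.mulVec (μ b)

/-- The trajectory kernel `K(s,t|T)`. -/
def Kker {n d : ℕ} (t0 : ℝ) (G : ℝ → Matrix (Fin n) (Fin d) ℝ)
    (Q : ℝ → Matrix (Fin d) (Fin d) ℝ) (PhiFS : ℝ → ℝ → Matrix (Fin n) (Fin n) ℝ)
    (S : ℝ → Matrix (Fin n) (Fin n) ℝ) (P0h : Matrix (Fin n) (Fin n) ℝ)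
    (s t : ℝ) : Matrix (Fin n) (Fin n) ℝ :=
  PhiFS s t0 * P0h * (1 + P0h * S t0 * P0h)⁻¹ * P0h * (PhiFS t t0)ᵀ +
    matInt (fun τ => PhiFS s τ * gqg G Q τ * (PhiFS t τ)ᵀ) t0 (min s t)

/-- The information kernel `Λ(s,t|T)`. -/
def Lker {n m : ℕ} (T : ℝ) (H : ℝ → Matrix (Fin m) (Fin n) ℝ)
    (R : ℝ → Matrix (Fin m) (Fin m) ℝ) (PhiFP : ℝ → ℝ → Matrix (Fin n) (Fin n) ℝ)
    (P : ℝ → Matrix (Fin n) (Fin n) ℝ) (STh : Matrix (Fin n) (Fin n) ℝ)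
    (s t : ℝ) : Matrix (Fin n) (Fin n) ℝ :=
  (PhiFP T s)ᵀ * STh * (1 + STh * P T * STh)⁻¹ * STh * PhiFP T t +
    matInt (fun τ => (PhiFP τ s)ᵀ * hrh H R τ * PhiFP τ t) (max s t) T


/-- Carathéodory solution of the forward linear ODE `x' = A(τ) x` (vector-valued). -/
def SolvesLinFwd {n : ℕ} (a b : ℝ) (A : ℝ → Matrix (Fin n) (Fin n) ℝ)
    (x : ℝ → Fin n → ℝ) : Prop :=
  ContinuousOn x (Icc a b) ∧
  IntervalIntegrable (fun τ => (A τ).mulVec (x τ)) volume a b ∧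
  ∀ t ∈ Icc a b, x t = x a + ∫ τ in a..t, (A τ).mulVec (x τ)

/-- Carathéodory solution of the backward linear ODE `-χ' = F(σ)* χ` on `[a,c]`
with terminal value `χ(c) = z`. -/
def SolvesChi {n : ℕ} (a c : ℝ) (F : ℝ → Matrix (Fin n) (Fin n) ℝ) (z : Fin n → ℝ)
    (χ : ℝ → Fin n → ℝ) : Prop :=
  ContinuousOn χ (Icc a c) ∧
  IntervalIntegrable (fun σ => (F σ)ᵀ.mulVec (χ σ)) volume a c ∧
  χ c = z ∧
  ∀ τ ∈ Icc a c, χ τ = z + ∫ σ in τ..c, (F σ)ᵀ.mulVec (χ σ)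

/-- Carathéodory solution of the impulse-response two-point boundary value problem at `t`:
`x' = Fx - GQG*q + GQG*χ·1_{τ<t}`, `-q' = F*q + H*R⁻¹Hx`,
`x(a) = -P0 q(a) + P0 χ(a)`, `q(b) = ST x(b)`. -/
def SolvesImpulseSystem {n m d : ℕ} (a b t : ℝ) (F : ℝ → Matrix (Fin n) (Fin n) ℝ)
    (G : ℝ → Matrix (Fin n) (Fin d) ℝ) (Q : ℝ → Matrix (Fin d) (Fin d) ℝ)
    (H : ℝ → Matrix (Fin m) (Fin n) ℝ) (R : ℝ → Matrix (Fin m) (Fin m) ℝ)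
    (P0 ST : Matrix (Fin n) (Fin n) ℝ) (χ x q : ℝ → Fin n → ℝ) : Prop :=
  ContinuousOn x (Icc a b) ∧ ContinuousOn q (Icc a b) ∧
  IntervalIntegrable (fun τ => (F τ).mulVec (x τ) - (gqg G Q τ).mulVec (q τ) +
    (if τ < t then (gqg G Q τ).mulVec (χ τ) else 0)) volume a b ∧
  IntervalIntegrable (fun τ => (F τ)ᵀ.mulVec (q τ) + (hrh H R τ).mulVec (x τ)) volume a b ∧
  (∀ s ∈ Icc a b, x s = x a + ∫ τ in a..s, ((F τ).mulVec (x τ) - (gqg G Q τ).mulVec (q τ) +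
    (if τ < t then (gqg G Q τ).mulVec (χ τ) else 0))) ∧
  (∀ s ∈ Icc a b, q s = q b + ∫ τ in s..b, ((F τ)ᵀ.mulVec (q τ) + (hrh H R τ).mulVec (x τ))) ∧
  x a = -(P0.mulVec (q a)) + P0.mulVec (χ a) ∧
  q b = ST.mulVec (x b)

/-- Right-hand side of the adjoint equation `-λ' = F*λ + H*R⁻¹H γ`. -/
def hamRHS {n m : ℕ} (F : ℝ → Matrix (Fin n) (Fin n) ℝ)
    (H : ℝ → Matrix (Fin m) (Fin n) ℝ) (R : ℝ → Matrix (Fin m) (Fin m) ℝ)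
    (gam lam : ℝ → Fin n → ℝ) (τ : ℝ) : Fin n → ℝ :=
  (F τ)ᵀ.mulVec (lam τ) + (hrh H R τ).mulVec (gam τ)

/-- Carathéodory solution `(γ, λ)` of the Hamiltonian system with a jump of size `lamb` at `s`
(and terminal condition appropriate to `ΣT = 0`):
`γ' = Fγ - GQG*λ`, `-λ' = F*λ + H*R⁻¹Hγ` on `[t0,s)` and `(s,T]`, `γ(t0) = -Π0 λ(t0)`,
`λ(T) = 0` if `s < T` (`λ(T) = lamb` if `s = T`), and `λ(s) - λ(s⁺) = lamb` if `s < T`. -/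
def SolvesHamJump {n m d : ℕ} (t0 T s : ℝ) (F : ℝ → Matrix (Fin n) (Fin n) ℝ)
    (G : ℝ → Matrix (Fin n) (Fin d) ℝ) (Q : ℝ → Matrix (Fin d) (Fin d) ℝ)
    (H : ℝ → Matrix (Fin m) (Fin n) ℝ) (R : ℝ → Matrix (Fin m) (Fin m) ℝ)
    (P0 : Matrix (Fin n) (Fin n) ℝ) (lamb : Fin n → ℝ) (gam lam : ℝ → Fin n → ℝ) : Prop :=
  ContinuousOn gam (Icc t0 T) ∧
  IntervalIntegrable (fun τ => (F τ).mulVec (gam τ) - (gqg G Q τ).mulVec (lam τ)) volume t0 T ∧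
  IntervalIntegrable (hamRHS F H R gam lam) volume t0 T ∧
  gam t0 = -(P0.mulVec (lam t0)) ∧
  (∀ t ∈ Icc t0 T,
    gam t = gam t0 + ∫ τ in t0..t, ((F τ).mulVec (gam τ) - (gqg G Q τ).mulVec (lam τ))) ∧
  ContinuousOn lam (Icc t0 s) ∧
  (∀ t ∈ Icc t0 s, lam t = lam s + ∫ τ in t..s, hamRHS F H R gam lam τ) ∧
  (s < T →
    ContinuousOn lam (Ioc s T) ∧ lam T = 0 ∧
    (∀ t ∈ Ioc s T, lam t = ∫ τ in t..T, hamRHS F H R gam lam τ) ∧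
    Tendsto lam (nhdsWithin s (Ioi s)) (nhds (lam s - lamb))) ∧
  (s = T → lam T = lamb)

/-- Carathéodory solution of the filter equation
`r' = (F - Π H* R⁻¹ H) r + Π H* R⁻¹ g`, `r(t0) = 0`. -/
def SolvesRODE {n m : ℕ} (a b : ℝ) (F : ℝ → Matrix (Fin n) (Fin n) ℝ)
    (H : ℝ → Matrix (Fin m) (Fin n) ℝ) (R : ℝ → Matrix (Fin m) (Fin m) ℝ)
    (P : ℝ → Matrix (Fin n) (Fin n) ℝ) (g : ℝ → Fin m → ℝ) (rr : ℝ → Fin n → ℝ) : Prop :=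
  ContinuousOn rr (Icc a b) ∧
  IntervalIntegrable (fun τ => (F τ - P τ * hrh H R τ).mulVec (rr τ) +
    (P τ * (H τ)ᵀ * (R τ)⁻¹).mulVec (g τ)) volume a b ∧
  rr a = 0 ∧
  ∀ t ∈ Icc a b, rr t = ∫ τ in a..t, ((F τ - P τ * hrh H R τ).mulVec (rr τ) +
    (P τ * (H τ)ᵀ * (R τ)⁻¹).mulVec (g τ))

/-- Carathéodory solution of the controlled ODE `x' = F x + G Q^{1/2} u`, `x(t0) = Π0^{1/2} ξ`. -/
def SolvesControlODE {n d : ℕ} (a b : ℝ) (F : ℝ → Matrix (Fin n) (Fin n) ℝ)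
    (G : ℝ → Matrix (Fin n) (Fin d) ℝ) (Qh : ℝ → Matrix (Fin d) (Fin d) ℝ)
    (P0h : Matrix (Fin n) (Fin n) ℝ) (ξ : Fin n → ℝ) (u : ℝ → Fin d → ℝ)
    (x : ℝ → Fin n → ℝ) : Prop :=
  ContinuousOn x (Icc a b) ∧
  IntervalIntegrable (fun σ => (F σ).mulVec (x σ) + (G σ * Qh σ).mulVec (u σ)) volume a b ∧
  x a = P0h.mulVec ξ ∧
  ∀ τ ∈ Icc a b, x τ = x a + ∫ σ in a..τ, ((F σ).mulVec (x σ) + (G σ * Qh σ).mulVec (u σ))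

/-- The least-squares objective of the deterministic smoothing problem. -/
def Jfun {n m d : ℕ} (a b : ℝ) (H : ℝ → Matrix (Fin m) (Fin n) ℝ)
    (R : ℝ → Matrix (Fin m) (Fin m) ℝ) (ST : Matrix (Fin n) (Fin n) ℝ)
    (ytil : ℝ → Fin m → ℝ) (ξ : Fin n → ℝ) (u : ℝ → Fin d → ℝ) (x : ℝ → Fin n → ℝ) : ℝ :=
  dotProduct ξ ξ + dotProduct (ST.mulVec (x b)) (x b)
    + (∫ τ in a..b, dotProduct (u τ) (u τ))
    + (∫ τ in a..b, dotProduct ((hrh H R τ).mulVec (x τ)) (x τ))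
    - 2 * ∫ τ in a..b, dotProduct (ytil τ) (((R τ)⁻¹ * H τ).mulVec (x τ))
/-- The Hamiltonian matrix `[[F, -GQG*], [-H*R⁻¹H, -F*]]`. -/
def hamMat {n m d : ℕ} (F : ℝ → Matrix (Fin n) (Fin n) ℝ)
    (G : ℝ → Matrix (Fin n) (Fin d) ℝ) (Q : ℝ → Matrix (Fin d) (Fin d) ℝ)
    (H : ℝ → Matrix (Fin m) (Fin n) ℝ) (R : ℝ → Matrix (Fin m) (Fin m) ℝ) (t : ℝ) :
    Matrix (Fin n ⊕ Fin n) (Fin n ⊕ Fin n) ℝ :=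
  Matrix.fromBlocks (F t) (-(gqg G Q t)) (-(hrh H R t)) (-(F t)ᵀ)

/-- `Φ̄(T,t) = [[I,0],[-ΣT,I]] · Φ_𝐇(T,t)`. -/
def phiBar {n : ℕ} (ST : Matrix (Fin n) (Fin n) ℝ)
    (PhiH : ℝ → ℝ → Matrix (Fin n ⊕ Fin n) (Fin n ⊕ Fin n) ℝ) (T t : ℝ) :
    Matrix (Fin n ⊕ Fin n) (Fin n ⊕ Fin n) ℝ :=
  Matrix.fromBlocks 1 0 (-ST) 1 * PhiH T t

/-! ### Primitives of integrable functions -/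

/-- `f` is, on `[a,b]`, a primitive of the integrable function `f'`; equivalently `f` is absolutely
continuous on `[a,b]` with a.e. derivative `f'`. -/
def Prim (a b : ℝ) (f f' : ℝ → ℝ) : Prop :=
  IntervalIntegrable f' volume a b ∧ ∀ t ∈ Icc a b, f t = f a + ∫ τ in a..t, f' τ

lemma ii_sub {a b s t : ℝ} {f : ℝ → ℝ} (h : IntervalIntegrable f volume a b)
    (hs : s ∈ Icc a b) (ht : t ∈ Icc a b) : IntervalIntegrable f volume s t := by
  have hab : a ≤ b := hs.1.trans hs.2
  refine h.mono_set ?_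
  rw [uIcc_of_le hab]
  exact uIcc_subset_Icc hs ht

lemma Prim.sub_eq {a b : ℝ} {f f' : ℝ → ℝ} (h : Prim a b f f') {s t : ℝ}
    (hs : s ∈ Icc a b) (ht : t ∈ Icc a b) : f t = f s + ∫ τ in s..t, f' τ := by
  have hab : a ≤ b := hs.1.trans hs.2
  have ha : a ∈ Icc a b := ⟨le_rfl, hab⟩
  rw [h.2 t ht, h.2 s hs,
    ← intervalIntegral.integral_add_adjacent_intervals (ii_sub h.1 ha hs) (ii_sub h.1 hs ht)]
  ring

lemma Prim.of_base {a b c : ℝ} {f f' : ℝ → ℝ} (hc : c ∈ Icc a b)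
    (h : IntervalIntegrable f' volume a b)
    (h2 : ∀ t ∈ Icc a b, f t = f c + ∫ τ in c..t, f' τ) : Prim a b f f' := by
  have hab : a ≤ b := hc.1.trans hc.2
  have ha : a ∈ Icc a b := ⟨le_rfl, hab⟩
  refine ⟨h, fun t ht => ?_⟩
  rw [h2 t ht, h2 a ha, add_assoc,
    intervalIntegral.integral_add_adjacent_intervals (ii_sub h hc ha) (ii_sub h ha ht)]

lemma Prim.continuousOn {a b : ℝ} (hab : a ≤ b) {f f' : ℝ → ℝ} (h : Prim a b f f') :
    ContinuousOn f (Icc a b) := by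
  have h1 : ContinuousOn (fun t => ∫ τ in a..t, f' τ) (Icc a b) := by
    have := intervalIntegral.continuousOn_primitive_interval (μ := volume) (f := f') (a := a) (b := b)
      (by rw [← intervalIntegrable_iff']; exact h.1)
    rwa [uIcc_of_le hab] at this
  exact (continuousOn_const.add h1).congr h.2

lemma Prim.congr {a b : ℝ} (hab : a ≤ b) {f f' g g' : ℝ → ℝ} (h : Prim a b f f')
    (hg : ∀ t ∈ Icc a b, g t = f t) (hg' : ∀ t ∈ Icc a b, g' t = f' t) : Prim a b g g' := by
  refine ⟨?_, fun t ht => ?_⟩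
  · refine h.1.congr_ae ?_
    rw [uIoc_of_le hab]
    filter_upwards [ae_restrict_mem measurableSet_Ioc] with t ht
    exact (hg' t (Ioc_subset_Icc_self ht)).symm
  · have ha : a ∈ Icc a b := ⟨le_rfl, ht.1.trans ht.2⟩
    rw [hg t ht, hg a ha, h.2 t ht]
    congr 1
    refine intervalIntegral.integral_congr fun x hx => ?_
    rw [uIcc_of_le ht.1] at hx
    exact (hg' x ⟨hx.1, hx.2.trans ht.2⟩).symm

lemma Prim.const (a b c : ℝ) : Prim a b (fun _ => c) (fun _ => 0) :=
  ⟨by simp, by simp⟩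

lemma Prim.add {a b : ℝ} {f f' g g' : ℝ → ℝ} (hf : Prim a b f f') (hg : Prim a b g g') :
    Prim a b (fun t => f t + g t) (fun t => f' t + g' t) := by
  refine ⟨hf.1.add hg.1, fun t ht => ?_⟩
  have ha : a ∈ Icc a b := ⟨le_rfl, ht.1.trans ht.2⟩
  beta_reduce
  rw [intervalIntegral.integral_add (ii_sub hf.1 ha ht) (ii_sub hg.1 ha ht), hf.2 t ht, hg.2 t ht]
  ring

lemma Prim.neg {a b : ℝ} {f f' : ℝ → ℝ} (hf : Prim a b f f') :
    Prim a b (fun t => -f t) (fun t => -f' t) := by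
  refine ⟨hf.1.neg, fun t ht => ?_⟩
  beta_reduce
  rw [intervalIntegral.integral_neg, hf.2 t ht]
  ring

lemma Prim.sum {a b : ℝ} {ι : Type*} (s : Finset ι) {f f' : ι → ℝ → ℝ}
    (h : ∀ i, Prim a b (f i) (f' i)) :
    Prim a b (fun t => ∑ i ∈ s, f i t) (fun t => ∑ i ∈ s, f' i t) := by
  classical
  induction s using Finset.induction_on with
  | empty => simpa using Prim.const a b 0
  | insert i s hi ih => simpa [Finset.sum_insert hi] using (h i).add ih

lemma Prim.mul {a b : ℝ} (hab : a ≤ b) {f f' g g' : ℝ → ℝ} (hf : Prim a b f f')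
    (hg : Prim a b g g') :
    Prim a b (fun t => f t * g t) (fun t => f' t * g t + f t * g' t) := by
  have hfc := hf.continuousOn hab
  have hgc := hg.continuousOn hab
  have hu : uIcc a b = Icc a b := uIcc_of_le hab
  refine ⟨(hf.1.mul_continuousOn (hu ▸ hgc)).add (hg.1.continuousOn_mul (hu ▸ hfc)),
    fun t ht => ?_⟩
  have ha : a ∈ Icc a b := ⟨le_rfl, hab⟩
  have hf1 := ii_sub hf.1 ha ht
  have hg1 := ii_sub hg.1 ha ht
  have hft := hf1.absolutelyContinuousOnInterval_intervalIntegral (c := a) (by simp)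
  have hgt := hg1.absolutelyContinuousOnInterval_intervalIntegral (c := a) (by simp)
  -- the library's integration by parts applies to the globally defined primitives `u`, `v`,
  -- which agree with `f`, `g` on `[a,t]`
  set u : ℝ → ℝ := fun x => f a + ∫ τ in a..x, f' τ with hud
  set v : ℝ → ℝ := fun x => g a + ∫ τ in a..x, g' τ with hvd
  have hcst : ∀ c : ℝ, AbsolutelyContinuousOnInterval (fun _ : ℝ => c) a t := fun c =>
    (contDiffOn_const (𝕜 := ℝ) (n := 1)).absolutelyContinuousOnInterval
  have hua : AbsolutelyContinuousOnInterval u a t := (hcst (f a)).add hft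
  have hva : AbsolutelyContinuousOnInterval v a t := (hcst (g a)).add hgt
  have key := hua.integral_deriv_mul_eq_sub hva
  have hu1 : ∀ x ∈ Icc a b, f x = u x := hf.2
  have hv1 : ∀ x ∈ Icc a b, g x = v x := hg.2
  beta_reduce
  rw [hu1 t ht, hv1 t ht, hu1 a ha, hv1 a ha, eq_comm, ← eq_sub_iff_add_eq', ← key]
  refine intervalIntegral.integral_congr_ae ?_
  filter_upwards [hf1.ae_hasDerivAt_integral, hg1.ae_hasDerivAt_integral] with x h1 h2 hx
  have hx' : x ∈ uIcc a t := uIoc_subset_uIcc hx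
  have hx2 : x ∈ Icc a b := by
    rw [uIcc_of_le ht.1] at hx'
    exact ⟨hx'.1, hx'.2.trans ht.2⟩
  have d1 : deriv u x = f' x := ((h1 hx' a (by simp)).const_add (f a)).deriv
  have d2 : deriv v x = g' x := ((h2 hx' a (by simp)).const_add (g a)).deriv
  rw [d1, d2, hu1 x hx2, hv1 x hx2]

/-- Grönwall-type uniqueness with an integrable rate `k`: on a short enough interval around a zero
of `φ` the maximum of `φ` is at most half of itself, so the zero set of `φ` is open and closed. -/
lemma eq_zero_of_le_integral {a b c : ℝ} (hc : c ∈ Icc a b) {φ k : ℝ → ℝ}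
    (hφ : ContinuousOn φ (Icc a b)) (hφ0 : ∀ t, 0 ≤ φ t) (hk0 : ∀ t, 0 ≤ k t)
    (hk : IntervalIntegrable k volume a b)
    (h : ∀ s ∈ Icc a b, ∀ t ∈ Icc a b, φ t ≤ φ s + |∫ τ in s..t, k τ * φ τ|)
    (h0 : φ c = 0) : ∀ t ∈ Icc a b, φ t = 0 := by
  have hab : a ≤ b := hc.1.trans hc.2
  have ha : a ∈ Icc a b := ⟨le_rfl, hab⟩
  have hKc : ContinuousOn (fun t => ∫ τ in a..t, k τ) (Icc a b) :=
    Prim.continuousOn hab (f' := k) ⟨hk, fun t ht => by simp⟩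
  let Z : Set (Icc a b) := {t | φ t = 0}
  have hφ' : Continuous fun t : Icc a b => φ t := continuousOn_iff_continuous_domRestrict.1 hφ
  have hZc : IsClosed Z := isClosed_eq hφ' continuous_const
  have hZo : IsOpen Z := by
    rw [Metric.isOpen_iff]
    rintro ⟨x, hx⟩ hxZ
    change φ x = 0 at hxZ
    obtain ⟨δ, hδ, hδ2⟩ := Metric.continuousOn_iff.1 hKc x hx (1 / 2) (by norm_num)
    refine ⟨δ, hδ, ?_⟩
    rintro ⟨t, ht⟩ htd
    change φ t = 0
    have htd' : |t - x| < δ := by simpa [Real.dist_eq, Subtype.dist_eq] using htd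
    have hsub : uIcc x t ⊆ Icc a b := uIcc_subset_Icc hx ht
    obtain ⟨u, hu, hmax⟩ := isCompact_uIcc.exists_isMaxOn (s := uIcc x t) ⟨x, left_mem_uIcc⟩
      (hφ.mono hsub)
    have hub := hsub hu
    have hux : |u - x| < δ := (abs_sub_left_of_mem_uIcc hu).trans_lt htd'
    have hKu : |∫ τ in x..u, k τ| < 1 / 2 := by
      have := hδ2 u hub (by simpa [Real.dist_eq] using hux)
      rwa [Real.dist_eq, intervalIntegral.integral_interval_sub_left (ii_sub hk ha hub)
        (ii_sub hk ha hx)] at this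
    have hle : |∫ τ in x..u, k τ * φ τ| ≤ φ u * |∫ τ in x..u, k τ| := by
      have e1 : |∫ τ in x..u, k τ * φ τ| ≤ |∫ τ in x..u, φ u * k τ| := by
        rw [← Real.norm_eq_abs, ← Real.norm_eq_abs]
        refine intervalIntegral.norm_integral_le_abs_of_norm_le ?_ ((ii_sub hk hx hub).const_mul _)|>.trans_eq rfl
        filter_upwards [ae_restrict_mem measurableSet_uIoc] with y hy
        have hy' : y ∈ uIcc x t := uIcc_subset_uIcc_left hu (uIoc_subset_uIcc hy)
        rw [Real.norm_of_nonneg (mul_nonneg (hk0 y) (hφ0 y)), mul_comm]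
        exact mul_le_mul_of_nonneg_right (hmax hy') (hk0 y)
      rwa [intervalIntegral.integral_const_mul, abs_mul, abs_of_nonneg (hφ0 u)] at e1
    have h1 := h x hx u hub
    have h2 : φ t ≤ φ u := hmax right_mem_uIcc
    nlinarith [hφ0 u, hφ0 t, mul_le_mul_of_nonneg_left hKu.le (hφ0 u)]
  have hZ : Z = univ := by
    have : PreconnectedSpace (Icc a b) := Subtype.preconnectedSpace isPreconnected_Icc
    exact IsClopen.eq_univ ⟨hZc, hZo⟩ ⟨⟨c, hc⟩, h0⟩
  intro t ht
  have : (⟨t, ht⟩ : Icc a b) ∈ Z := hZ ▸ mem_univ _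
  exact this

/-! ### Matrix-valued primitives and uniqueness for linear equations -/

/-- Entrywise version of `Prim`: on `[a,b]`, `X` is a primitive of the integrable matrix function
`X'`. -/
def MPrim {ι κ : Type*} (a b : ℝ) (X X' : ℝ → Matrix ι κ ℝ) : Prop :=
  ∀ i j, Prim a b (fun t => X t i j) (fun t => X' t i j)

section MPrim

variable {ι κ l : Type*} {a b : ℝ}

lemma MPrim.congr (hab : a ≤ b) {X X' Y Y' : ℝ → Matrix ι κ ℝ} (h : MPrim a b X X')
    (hY : ∀ t ∈ Icc a b, Y t = X t) (hY' : ∀ t ∈ Icc a b, Y' t = X' t) : MPrim a b Y Y' :=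
  fun i j => (h i j).congr hab (fun t ht => by rw [hY t ht]) (fun t ht => by rw [hY' t ht])

lemma MPrim.congr' (hab : a ≤ b) {X X' Y' : ℝ → Matrix ι κ ℝ} (h : MPrim a b X X')
    (hY' : ∀ t ∈ Icc a b, Y' t = X' t) : MPrim a b X Y' :=
  h.congr hab (fun _ _ => rfl) hY'

lemma MPrim.of_base {c : ℝ} (hc : c ∈ Icc a b) {X X' : ℝ → Matrix ι κ ℝ} (h : MatII X' a b)
    (h2 : ∀ t ∈ Icc a b, X t = X c + matInt X' c t) : MPrim a b X X' :=
  fun i j => Prim.of_base hc (h i j) fun t ht => by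
    have := congrFun (congrFun (h2 t ht) i) j
    simpa [matInt] using this

lemma MPrim.eq_matInt {X X' : ℝ → Matrix ι κ ℝ} (h : MPrim a b X X') {s t : ℝ}
    (hs : s ∈ Icc a b) (ht : t ∈ Icc a b) : X t = X s + matInt X' s t := by
  ext i j
  simpa [matInt] using (h i j).sub_eq hs ht

lemma MPrim.const (C : Matrix ι κ ℝ) : MPrim a b (fun _ => C) (fun _ => 0) :=
  fun i j => Prim.const a b (C i j)

lemma MPrim.add {X X' Y Y' : ℝ → Matrix ι κ ℝ} (hX : MPrim a b X X') (hY : MPrim a b Y Y') :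
    MPrim a b (fun t => X t + Y t) (fun t => X' t + Y' t) :=
  fun i j => (hX i j).add (hY i j)

lemma MPrim.neg {X X' : ℝ → Matrix ι κ ℝ} (hX : MPrim a b X X') :
    MPrim a b (fun t => -X t) (fun t => -X' t) :=
  fun i j => (hX i j).neg

lemma MPrim.sub {X X' Y Y' : ℝ → Matrix ι κ ℝ} (hX : MPrim a b X X') (hY : MPrim a b Y Y') :
    MPrim a b (fun t => X t - Y t) (fun t => X' t - Y' t) := by
  simpa only [sub_eq_add_neg] using hX.add hY.neg

lemma MPrim.transpose {X X' : ℝ → Matrix ι κ ℝ} (hX : MPrim a b X X') :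
    MPrim a b (fun t => (X t)ᵀ) (fun t => (X' t)ᵀ) :=
  fun i j => hX j i

lemma MPrim.mul [Fintype κ] (hab : a ≤ b) {X X' : ℝ → Matrix ι κ ℝ} {Y Y' : ℝ → Matrix κ l ℝ}
    (hX : MPrim a b X X') (hY : MPrim a b Y Y') :
    MPrim a b (fun t => X t * Y t) (fun t => X' t * Y t + X t * Y' t) := fun i j => by
  have := Prim.sum Finset.univ fun k => (hX i k).mul hab (hY k j)
  simpa [Matrix.mul_apply, Finset.sum_add_distrib] using this

lemma MPrim.contOn (hab : a ≤ b) {X X' : ℝ → Matrix ι κ ℝ} (hX : MPrim a b X X') :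
    MatContOn X (Icc a b) := fun i j => (hX i j).continuousOn hab

lemma MatII.add {X Y : ℝ → Matrix ι κ ℝ} (hX : MatII X a b) (hY : MatII Y a b) :
    MatII (fun t => X t + Y t) a b := fun i j => (hX i j).add (hY i j)

lemma MatII.sub {X Y : ℝ → Matrix ι κ ℝ} (hX : MatII X a b) (hY : MatII Y a b) :
    MatII (fun t => X t - Y t) a b := fun i j => (hX i j).sub (hY i j)

lemma MatII.transpose {X : ℝ → Matrix ι κ ℝ} (hX : MatII X a b) :
    MatII (fun t => (X t)ᵀ) a b := fun i j => hX j i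

lemma ii_sum {γ : Type*} (s : Finset γ) {f : γ → ℝ → ℝ}
    (h : ∀ i ∈ s, IntervalIntegrable (f i) volume a b) :
    IntervalIntegrable (fun t => ∑ i ∈ s, f i t) volume a b := by
  have := IntervalIntegrable.sum s h
  refine this.congr fun x _ => ?_
  simp

lemma MatII.mul_cont [Fintype κ] (hab : a ≤ b) {X : ℝ → Matrix ι κ ℝ} {Y : ℝ → Matrix κ l ℝ}
    (hX : MatII X a b) (hY : MatContOn Y (Icc a b)) : MatII (fun t => X t * Y t) a b := fun i j => by
  simp only [Matrix.mul_apply]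
  exact ii_sum _ fun k _ => (hX i k).mul_continuousOn (by rw [uIcc_of_le hab]; exact hY k j)

lemma MatII.cont_mul [Fintype κ] (hab : a ≤ b) {X : ℝ → Matrix ι κ ℝ} {Y : ℝ → Matrix κ l ℝ}
    (hX : MatContOn X (Icc a b)) (hY : MatII Y a b) : MatII (fun t => X t * Y t) a b := fun i j => by
  simp only [Matrix.mul_apply]
  exact ii_sum _ fun k _ => (hY k j).continuousOn_mul (by rw [uIcc_of_le hab]; exact hX i k)

lemma MatII.congr (hab : a ≤ b) {X Y : ℝ → Matrix ι κ ℝ} (hX : MatII X a b)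
    (h : ∀ t ∈ Icc a b, Y t = X t) : MatII Y a b := fun i j => by
  refine (hX i j).congr fun t ht => ?_
  rw [uIoc_of_le hab] at ht
  simp only [h t (Ioc_subset_Icc_self ht)]

lemma MatContOn.transpose {s : Set ℝ} {X : ℝ → Matrix ι κ ℝ} (h : MatContOn X s) :
    MatContOn (fun t => (X t)ᵀ) s := fun i j => h j i

lemma MatContOn.mul [Fintype κ] {s : Set ℝ} {X : ℝ → Matrix ι κ ℝ} {Y : ℝ → Matrix κ l ℝ}
    (hX : MatContOn X s) (hY : MatContOn Y s) : MatContOn (fun t => X t * Y t) s := fun i j => by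
  simp only [Matrix.mul_apply]
  exact continuousOn_finsetSum _ fun k _ => (hX i k).mul (hY k j)

/-- A primitive of an integrable matrix function, based at `a`. -/
lemma MPrim.matInt (hab : a ≤ b) {X : ℝ → Matrix ι κ ℝ} (h : MatII X a b) :
    MPrim a b (fun t => SDEKernels.matInt X a t) X :=
  MPrim.of_base (c := a) ⟨le_rfl, hab⟩ h fun t _ => by
    ext i j; simp [SDEKernels.matInt]

/-- Uniqueness for the Sylvester-type linear equation `E' = A E + E B` with integrable
coefficients: a solution vanishing at one point vanishes on the whole interval. -/
lemma MPrim.eq_zero [Fintype ι] [Fintype κ] {c : ℝ} (hc : c ∈ Icc a b)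
    {A : ℝ → Matrix ι ι ℝ} {B : ℝ → Matrix κ κ ℝ} (hA : MatII A a b) (hB : MatII B a b)
    {E : ℝ → Matrix ι κ ℝ} (hE : MPrim a b E (fun t => A t * E t + E t * B t)) (h0 : E c = 0) :
    ∀ t ∈ Icc a b, E t = 0 := by
  have hab : a ≤ b := hc.1.trans hc.2
  let φ : ℝ → ℝ := fun t => ∑ i, ∑ j, |E t i j|
  let k0 : ℝ → ℝ := fun t => (∑ i, ∑ j, |A t i j|) + ∑ i, ∑ j, |B t i j|
  let N : ℝ := ∑ _i : ι, ∑ _j : κ, (1 : ℝ)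
  have hN : 0 ≤ N := Finset.sum_nonneg fun _ _ => Finset.sum_nonneg fun _ _ => zero_le_one
  have hφ0 : ∀ t, 0 ≤ φ t := fun t =>
    Finset.sum_nonneg fun _ _ => Finset.sum_nonneg fun _ _ => abs_nonneg _
  have hA0 : ∀ t, 0 ≤ ∑ i, ∑ j, |A t i j| := fun t =>
    Finset.sum_nonneg fun _ _ => Finset.sum_nonneg fun _ _ => abs_nonneg _
  have hB0 : ∀ t, 0 ≤ ∑ i, ∑ j, |B t i j| := fun t =>
    Finset.sum_nonneg fun _ _ => Finset.sum_nonneg fun _ _ => abs_nonneg _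
  have hk00 : ∀ t, 0 ≤ k0 t := fun t => add_nonneg (hA0 t) (hB0 t)
  have hφc : ContinuousOn φ (Icc a b) :=
    continuousOn_finsetSum _ fun i _ => continuousOn_finsetSum _ fun j _ =>
      (hE.contOn hab i j).abs
  have hk : IntervalIntegrable k0 volume a b :=
    (ii_sum _ fun i _ => ii_sum _ fun j _ => (hA i j).abs).add
      (ii_sum _ fun i _ => ii_sum _ fun j _ => (hB i j).abs)
  have hent : ∀ {γ δ : Type _} [Fintype γ] [Fintype δ] (M : Matrix γ δ ℝ) i j,
      |M i j| ≤ ∑ i, ∑ j, |M i j| := fun M i j =>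
    (Finset.single_le_sum (f := fun j => |M i j|) (fun _ _ => abs_nonneg _)
      (Finset.mem_univ j)).trans
      (Finset.single_le_sum (f := fun i => ∑ j, |M i j|)
        (fun _ _ => Finset.sum_nonneg fun _ _ => abs_nonneg _) (Finset.mem_univ i))
  have hbd : ∀ t i j, |(A t * E t + E t * B t) i j| ≤ k0 t * φ t := by
    intro t i j
    have e1 : |(A t * E t) i j| ≤ (∑ i, ∑ j, |A t i j|) * φ t := by
      rw [Matrix.mul_apply]
      refine (Finset.abs_sum_le_sum_abs _ _).trans ?_
      calc ∑ k, |A t i k * E t k j| ≤ ∑ k, |A t i k| * φ t := by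
            refine Finset.sum_le_sum fun k _ => ?_
            rw [abs_mul]
            exact mul_le_mul_of_nonneg_left (hent _ _ _) (abs_nonneg _)
        _ ≤ _ := by
            rw [← Finset.sum_mul]
            refine mul_le_mul_of_nonneg_right ?_ (hφ0 t)
            exact Finset.single_le_sum (f := fun i => ∑ j, |A t i j|)
              (fun _ _ => Finset.sum_nonneg fun _ _ => abs_nonneg _) (Finset.mem_univ i)
    have e2 : |(E t * B t) i j| ≤ (∑ i, ∑ j, |B t i j|) * φ t := by
      rw [Matrix.mul_apply]
      refine (Finset.abs_sum_le_sum_abs _ _).trans ?_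
      calc ∑ k, |E t i k * B t k j| ≤ ∑ k, φ t * |B t k j| := by
            refine Finset.sum_le_sum fun k _ => ?_
            rw [abs_mul]
            exact mul_le_mul_of_nonneg_right (hent _ _ _) (abs_nonneg _)
        _ ≤ _ := by
            rw [← Finset.mul_sum, mul_comm]
            refine mul_le_mul_of_nonneg_right ?_ (hφ0 t)
            exact Finset.sum_le_sum fun k _ => Finset.single_le_sum (f := fun j => |B t k j|)
              (fun _ _ => abs_nonneg _) (Finset.mem_univ j)
    rw [Matrix.add_apply]
    refine (abs_add_le _ _).trans ?_
    simp only [k0, add_mul]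
    exact add_le_add e1 e2
  have hint : ∀ s ∈ Icc a b, ∀ t ∈ Icc a b,
      IntervalIntegrable (fun τ => k0 τ * φ τ) volume s t := fun s hs t ht =>
    ii_sub (hk.mul_continuousOn (by rwa [uIcc_of_le hab])) hs ht
  have hz := eq_zero_of_le_integral hc (φ := φ) (k := fun t => N * k0 t) hφc hφ0
    (fun t => mul_nonneg hN (hk00 t)) (hk.const_mul N) ?_ ?_
  · intro t ht
    ext i j
    have := (hent (E t) i j).trans (hz t ht).le
    simpa using abs_eq_zero.1 (le_antisymm this (abs_nonneg _))
  · intro s hs t ht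
    have hij : ∀ i j, |E t i j| ≤ |E s i j| + |∫ τ in s..t, k0 τ * φ τ| := by
      intro i j
      rw [(hE i j).sub_eq hs ht]
      refine (abs_add_le _ _).trans (add_le_add le_rfl ?_)
      rw [← Real.norm_eq_abs, ← Real.norm_eq_abs]
      refine intervalIntegral.norm_integral_le_abs_of_norm_le ?_ (hint s hs t ht)
      exact Filter.Eventually.of_forall fun y => hbd y i j
    calc φ t ≤ ∑ i, ∑ j, (|E s i j| + 1 * |∫ τ in s..t, k0 τ * φ τ|) :=
          Finset.sum_le_sum fun i _ => Finset.sum_le_sum fun j _ => by simpa using hij i j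
      _ = φ s + N * |∫ τ in s..t, k0 τ * φ τ| := by
          simp only [Finset.sum_add_distrib, ← Finset.sum_mul, φ, N]
      _ = φ s + |∫ τ in s..t, N * k0 τ * φ τ| := by
          simp only [mul_assoc]
          rw [intervalIntegral.integral_const_mul, abs_mul, abs_of_nonneg hN]
  · simp [φ, h0]

end MPrim

/-! ### The weight `R⁻¹` -/

/-- `R ⪰ r I` bounds every entry of `R⁻¹` by `1/r`. -/
lemma inv_entry_bound {m : ℕ} {r : ℝ} (hr : 0 < r) {R : Matrix (Fin m) (Fin m) ℝ}
    (hR : (R - r • (1 : Matrix (Fin m) (Fin m) ℝ)).PosSemidef) :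
    R.PosDef ∧ ∀ k l, |R⁻¹ k l| ≤ 1 / r := by
  have hpd : R.PosDef := by
    have h1 : (r • (1 : Matrix (Fin m) (Fin m) ℝ)).PosDef := Matrix.PosDef.one.smul hr
    have := Matrix.PosDef.posSemidef_add hR h1
    simpa using this
  refine ⟨hpd, fun k l => ?_⟩
  set x : Fin m → ℝ := fun i => R⁻¹ i l with hx
  have hRx : R *ᵥ x = Pi.single l 1 := by
    have h1 : R * R⁻¹ = 1 := Matrix.mul_nonsing_inv R ((Matrix.isUnit_iff_isUnit_det R).1 hpd.isUnit)
    ext i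
    have := congrFun (congrFun h1 i) l
    rw [Matrix.mul_apply] at this
    simp only [Matrix.mulVec, dotProduct, hx, this, Matrix.one_apply, Pi.single_apply]
  have hq : r * ∑ i, x i ^ 2 ≤ x l := by
    have := hR.dotProduct_mulVec_nonneg x
    rw [Matrix.sub_mulVec, hRx, Matrix.smul_mulVec, Matrix.one_mulVec, dotProduct_sub] at this
    simp [dotProduct, Pi.single_apply] at this
    rw [Finset.mul_sum]
    refine le_trans (le_of_eq ?_) this
    exact Finset.sum_congr rfl fun i _ => by ring
  have hk : ∀ k, r * x k ^ 2 ≤ x l := fun k => le_trans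
    (mul_le_mul_of_nonneg_left (Finset.single_le_sum (f := fun i => x i ^ 2)
      (fun _ _ => sq_nonneg _) (Finset.mem_univ k)) hr.le) hq
  have hl0 : 0 ≤ x l := le_trans (by positivity) (hk l)
  have hl : r * x l ≤ 1 := by
    by_contra! hcon
    have := hk l
    have h2 : 0 < x l := by
      rcases hl0.eq_or_lt with h | h
      · rw [← h] at hcon; norm_num at hcon
      · exact h
    nlinarith
  change |x k| ≤ 1 / r
  refine abs_le_of_sq_le_sq ?_ (by positivity)
  rw [div_pow, one_pow, le_div_iff₀ (by positivity)]
  nlinarith [hk k]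

lemma ii_mul_bdd_mul {a b C : ℝ} (hab : a ≤ b) {f g h : ℝ → ℝ}
    (hf : IntervalIntegrable f volume a b) (hf2 : IntervalIntegrable (fun t => f t ^ 2) volume a b)
    (hg : IntervalIntegrable g volume a b) (hg2 : IntervalIntegrable (fun t => g t ^ 2) volume a b)
    (hm : AEStronglyMeasurable h (volume.restrict (Ioc a b))) (hb : ∀ t ∈ Icc a b, |h t| ≤ C) :
    IntervalIntegrable (fun t => f t * h t * g t) volume a b := by
  rw [intervalIntegrable_iff_integrableOn_Ioc_of_le hab] at *
  refine Integrable.mono' ((hf2.add hg2).const_mul C)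
    ((hf.aestronglyMeasurable.mul hm).mul hg.aestronglyMeasurable) ?_
  filter_upwards [ae_restrict_mem measurableSet_Ioc] with t ht
  have hbt := hb t (Ioc_subset_Icc_self ht)
  have h1 : |f t| * |g t| ≤ f t ^ 2 + g t ^ 2 := by
    nlinarith [sq_nonneg (|f t| - |g t|), sq_abs (f t), sq_abs (g t), sq_nonneg (f t),
      sq_nonneg (g t)]
  rw [Real.norm_eq_abs, abs_mul, abs_mul]
  calc |f t| * |h t| * |g t| = |h t| * (|f t| * |g t|) := by ring
    _ ≤ C * (f t ^ 2 + g t ^ 2) := mul_le_mul hbt h1 (by positivity) ((abs_nonneg _).trans hbt)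

lemma det_aemeasurable {m : ℕ} {ρ : Measure ℝ} {M : ℝ → Matrix (Fin m) (Fin m) ℝ}
    (h : ∀ i j, AEMeasurable (fun t => M t i j) ρ) : AEMeasurable (fun t => (M t).det) ρ := by
  simp only [Matrix.det_apply']
  exact Finset.aemeasurable_fun_sum _ fun σ _ =>
    (Finset.aemeasurable_fun_prod _ fun i _ => h _ _).const_mul _

lemma inv_aesm {m : ℕ} {a b : ℝ} (hab : a ≤ b) {R : ℝ → Matrix (Fin m) (Fin m) ℝ}
    (hR : MatII R a b) (k l : Fin m) :
    AEStronglyMeasurable (fun t => (R t)⁻¹ k l) (volume.restrict (Ioc a b)) := by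
  have h0 : ∀ i j, AEMeasurable (fun t => R t i j) (volume.restrict (Ioc a b)) := fun i j =>
    ((intervalIntegrable_iff_integrableOn_Ioc_of_le hab).1 (hR i j)).aestronglyMeasurable.aemeasurable
  have hadj : AEMeasurable (fun t => (R t).adjugate k l) (volume.restrict (Ioc a b)) := by
    simp only [Matrix.adjugate_apply]
    refine det_aemeasurable fun i j => ?_
    by_cases hi : i = l
    · subst hi; simp
    · simpa [Matrix.updateRow_ne hi] using h0 i j
  have := ((det_aemeasurable h0).inv.mul hadj).aestronglyMeasurable
  refine this.congr (Filter.Eventually.of_forall fun t => ?_)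
  simp [Matrix.inv_def, Ring.inverse_eq_inv']

/-- `H* R⁻¹ K` is integrable for square-integrable `H`, `K`. -/
lemma weighted_MatII {m : ℕ} {ι κ : Type*} {a b r : ℝ} (hab : a ≤ b) (hr : 0 < r)
    {H : ℝ → Matrix (Fin m) ι ℝ} {K : ℝ → Matrix (Fin m) κ ℝ}
    {R : ℝ → Matrix (Fin m) (Fin m) ℝ} (hH : MatL2 H a b) (hK : MatL2 K a b) (hR : MatL2 R a b)
    (hRbd : ∀ t ∈ Icc a b, (R t - r • (1 : Matrix (Fin m) (Fin m) ℝ)).PosSemidef) :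
    MatII (fun t => (H t)ᵀ * (R t)⁻¹ * K t) a b := fun i j => by
  simp only [Matrix.mul_apply, Finset.sum_mul, Matrix.transpose_apply]
  refine ii_sum _ fun l _ => ii_sum _ fun k _ => ?_
  exact ii_mul_bdd_mul hab (hH k i).1 (hH k i).2 (hK l j).1 (hK l j).2
    (inv_aesm hab (fun i j => (hR i j).1) k l) fun t ht => (inv_entry_bound hr (hRbd t ht)).2 k l

lemma gqg_transpose {n d : ℕ} {G : ℝ → Matrix (Fin n) (Fin d) ℝ}
    {Q : ℝ → Matrix (Fin d) (Fin d) ℝ} {t : ℝ} (h : (Q t).PosSemidef) :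
    (gqg G Q t)ᵀ = gqg G Q t := by
  have := h.isHermitian.eq
  rw [conjTranspose_eq_transpose_of_trivial] at this
  simp [gqg, Matrix.transpose_mul, this, Matrix.mul_assoc]

lemma hrh_posSemidef {n m : ℕ} {H : ℝ → Matrix (Fin m) (Fin n) ℝ}
    {R : ℝ → Matrix (Fin m) (Fin m) ℝ} {t : ℝ} (h : (R t).PosDef) : (hrh H R t).PosSemidef := by
  have := h.inv.posSemidef.conjTranspose_mul_mul_same (H t)
  rwa [conjTranspose_eq_transpose_of_trivial] at this

lemma gqg_posSemidef {n d : ℕ} {G : ℝ → Matrix (Fin n) (Fin d) ℝ}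
    {Q : ℝ → Matrix (Fin d) (Fin d) ℝ} {t : ℝ} (h : (Q t).PosSemidef) :
    (gqg G Q t).PosSemidef := by
  have := h.mul_mul_conjTranspose_same (G t)
  rwa [conjTranspose_eq_transpose_of_trivial] at this

lemma hrh_transpose {n m : ℕ} {H : ℝ → Matrix (Fin m) (Fin n) ℝ}
    {R : ℝ → Matrix (Fin m) (Fin m) ℝ} {t : ℝ} (h : (R t).PosDef) :
    (hrh H R t)ᵀ = hrh H R t := by
  have := (hrh_posSemidef (H := H) h).isHermitian.eq
  rwa [conjTranspose_eq_transpose_of_trivial] at this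

/-! ### The Riccati solutions and the decoupling of the boundary value problem -/

section Decoupling

variable {n : ℕ} {p : Type*} {a b : ℝ} {F B C S P X : ℝ → Matrix (Fin n) (Fin n) ℝ}
  {M V L rr : ℝ → Matrix (Fin n) p ℝ}

lemma riccati_symm (hab : a ≤ b) (hF : MatII F a b) (hB : MatII B a b)
    (hBs : ∀ t ∈ Icc a b, (B t)ᵀ = B t) (hCs : ∀ t ∈ Icc a b, (C t)ᵀ = C t)
    (hS : MPrim a b S fun t => -(S t * F t + (F t)ᵀ * S t - S t * B t * S t + C t))
    (hSb : S b = 0) : ∀ t ∈ Icc a b, (S t)ᵀ = S t := by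
  have hSc := hS.contOn hab
  have hE := (hS.sub hS.transpose).congr' hab
    (Y' := fun t => ((S t)ᵀ * B t - (F t)ᵀ) * (S t - (S t)ᵀ) +
      (S t - (S t)ᵀ) * (B t * S t - F t)) (by
      intro t ht
      simp only [transpose_neg, transpose_add, transpose_sub, transpose_mul, transpose_transpose,
        hBs t ht, hCs t ht]
      noncomm_ring)
  have h := MPrim.eq_zero ⟨hab, le_rfl⟩ ((MatII.cont_mul hab hSc.transpose hB).sub hF.transpose)
    ((hB.mul_cont hab hSc).sub hF) hE (by simp [hSb])
  intro t ht
  exact (sub_eq_zero.1 (h t ht)).symm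

/-- Along `X' = (F - B S) X` one has `(X* S X)' = -X* (S B S + C) X ⪯ 0`, so the backward Riccati
solution with zero terminal value is positive semidefinite. -/
lemma riccati_posSemidef (hab : a ≤ b)
    (hBs : ∀ t ∈ Icc a b, (B t).PosSemidef) (hCs : ∀ t ∈ Icc a b, (C t).PosSemidef)
    (hS : MPrim a b S fun t => -(S t * F t + (F t)ᵀ * S t - S t * B t * S t + C t))
    (hSb : S b = 0) (hSs : ∀ t ∈ Icc a b, (S t)ᵀ = S t)
    (hX : MPrim a b X fun t => (F t - B t * S t) * X t) (hXa : X a = 1) :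
    (S a).PosSemidef := by
  have ha : a ∈ Icc a b := ⟨le_rfl, hab⟩
  have hb : b ∈ Icc a b := ⟨hab, le_rfl⟩
  refine Matrix.PosSemidef.of_dotProduct_mulVec_nonneg ?_ fun x => ?_
  · rw [IsHermitian, conjTranspose_eq_transpose_of_trivial, hSs a ha]
  let c : Matrix (Fin n) (Fin 1) ℝ := replicateCol (Fin 1) x
  have hy := hX.mul hab (MPrim.const c)
  have hq := (hy.transpose.mul hab (hS.mul hab hy)).congr' hab
    (Y' := fun t => -((X t * c)ᵀ * ((S t)ᵀ * B t * S t + C t) * (X t * c))) (by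
      intro t ht
      have hBt : (B t)ᵀ = B t := by
        have := (hBs t ht).isHermitian.eq
        rwa [conjTranspose_eq_transpose_of_trivial] at this
      simp only [transpose_add, transpose_sub, transpose_mul, transpose_zero, hBt, hSs t ht, Matrix.mul_add, Matrix.add_mul, Matrix.mul_sub, Matrix.sub_mul,
        Matrix.mul_neg, Matrix.neg_mul, Matrix.mul_assoc, Matrix.mul_zero, Matrix.zero_mul]
      abel)
  have h1 := (hq 0 0).2 b hb
  have hpos : 0 ≤ ∫ τ in a..b, ((X τ * c)ᵀ * ((S τ)ᵀ * B τ * S τ + C τ) * (X τ * c)) 0 0 := by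
    refine intervalIntegral.integral_nonneg hab fun t ht => ?_
    have h2 := ((hBs t ht).conjTranspose_mul_mul_same (S t)).add (hCs t ht)
    have h3 := h2.conjTranspose_mul_mul_same (X t * c)
    simp only [conjTranspose_eq_transpose_of_trivial] at h3
    exact h3.diag_nonneg
  simp only [Matrix.neg_apply, intervalIntegral.integral_neg, hSb, hXa, Matrix.zero_mul,
    Matrix.mul_zero, Matrix.one_mul, Matrix.zero_apply] at h1
  have h4 : (cᵀ * (S a * c)) 0 0 = star x ⬝ᵥ S a *ᵥ x := by
    simp [c, Matrix.mul_apply, dotProduct, mulVec]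
  rw [← h4]
  linarith

/-- The decoupling `μ = r - Π ν`: the defect solves the homogeneous filter equation. -/
lemma filter_decoupling (hab : a ≤ b) (hA : MatII (fun t => F t - P t * C t) a b) [Fintype p]
    (hM : MPrim a b M fun t => F t * M t - B t * V t)
    (hV : MPrim a b V fun t => -((F t)ᵀ * V t + C t * M t - L t))
    (hP : MPrim a b P fun t => F t * P t + P t * (F t)ᵀ - P t * C t * P t + B t)
    (hr : MPrim a b rr fun t => (F t - P t * C t) * rr t + P t * L t)
    (hMa : M a = -(P a * V a)) (hra : rr a = 0) :
    ∀ t ∈ Icc a b, M t + P t * V t - rr t = 0 := by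
  refine MPrim.eq_zero (c := a) ⟨le_rfl, hab⟩ hA (B := fun _ => 0) (fun _ _ => by simp) ?_
    (by simp [hMa, hra])
  refine ((hM.add (hP.mul hab hV)).sub hr).congr' hab fun t _ => ?_
  simp only [Matrix.mul_add, Matrix.add_mul, Matrix.mul_sub, Matrix.sub_mul,
        Matrix.mul_neg, Matrix.mul_assoc, Matrix.mul_zero]
  abel

/-- The dual decoupling. With `A = F - B S` and `w = ν - S μ` one has `w' = -A* w + l`, while
`Z = X (N + ∫ X⁻¹ B X⁻¹*) X*` solves the Lyapunov equation `Z' = A Z + Z A* + B`. Hence `μ + Z w`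
and `X ∫ (N + ∫ X⁻¹ B X⁻¹*) X* l` solve the same initial value problem `z' = A z + Z l`. -/
lemma kernel_decoupling (hab : a ≤ b) [Fintype p]
    (hA : MatII (fun t => F t - B t * S t) a b) (hL : MatII L a b)
    (hBs : ∀ t ∈ Icc a b, (B t)ᵀ = B t)
    (hM : MPrim a b M fun t => F t * M t - B t * V t)
    (hV : MPrim a b V fun t => -((F t)ᵀ * V t + C t * M t - L t))
    (hS : MPrim a b S fun t => -(S t * F t + (F t)ᵀ * S t - S t * B t * S t + C t))
    (hSb : S b = 0) (hSs : ∀ t ∈ Icc a b, (S t)ᵀ = S t) (hVb : V b = 0)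
    (hX : MPrim a b X fun t => (F t - B t * S t) * X t) (hXa : X a = 1)
    {D Y : ℝ → Matrix (Fin n) (Fin n) ℝ} (hY : ∀ t ∈ Icc a b, X t * Y t = 1)
    (hD : MPrim a b D fun t => Y t * B t * (Y t)ᵀ)
    (hMa : M a = -(D a * (V a - S a * M a))) :
    MatII (fun t => D t * (X t)ᵀ * L t) a b ∧
      M b = X b * matInt (fun t => D t * (X t)ᵀ * L t) a b := by
  have ha : a ∈ Icc a b := ⟨le_rfl, hab⟩
  have hb : b ∈ Icc a b := ⟨hab, le_rfl⟩
  have hJI : MatII (fun t => D t * (X t)ᵀ * L t) a b :=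
    hL.cont_mul hab ((hD.contOn hab).mul (hX.contOn hab).transpose)
  refine ⟨hJI, ?_⟩
  have hJ := MPrim.matInt hab hJI
  have hq := hX.mul hab hJ
  have hw := (hV.sub (hS.mul hab hM)).congr' hab
    (Y' := fun t => -((F t - B t * S t)ᵀ * (V t - S t * M t)) + L t) (by
      intro t ht
      simp only [transpose_sub, transpose_mul, hBs t ht, hSs t ht, Matrix.add_mul,
        Matrix.mul_sub, Matrix.sub_mul, Matrix.neg_mul, Matrix.mul_assoc]
      abel)
  have hZ := ((hX.mul hab hD).mul hab hX.transpose).congr' hab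
    (Y' := fun t => (F t - B t * S t) * (X t * D t * (X t)ᵀ) +
      (X t * D t * (X t)ᵀ) * (F t - B t * S t)ᵀ + B t) (by
      intro t ht
      have e : B t = X t * (Y t * B t * (Y t)ᵀ) * (X t)ᵀ := by
        calc B t = (X t * Y t) * B t * (X t * Y t)ᵀ := by simp [hY t ht]
          _ = _ := by simp only [transpose_mul, Matrix.mul_assoc]
      have e' : ∀ U : Matrix (Fin n) (Fin n) ℝ,
          U + B t = U + X t * (Y t * B t * (Y t)ᵀ) * (X t)ᵀ := fun U => by rw [← e]
      rw [e']
      simp only [transpose_mul, Matrix.add_mul, Matrix.mul_assoc]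
      abel)
  have hE := ((hM.add (hZ.mul hab hw)).sub hq).congr' hab
    (Y' := fun t => (F t - B t * S t) * (M t + X t * D t * (X t)ᵀ * (V t - S t * M t) -
      X t * matInt (fun t => D t * (X t)ᵀ * L t) a t) +
      (M t + X t * D t * (X t)ᵀ * (V t - S t * M t) -
      X t * matInt (fun t => D t * (X t)ᵀ * L t) a t) * (0 : Matrix p p ℝ)) (by
      intro t ht
      generalize (F t - B t * S t)ᵀ = A'
      simp only [Matrix.mul_add, Matrix.add_mul,
        Matrix.mul_sub, Matrix.sub_mul, Matrix.mul_neg, Matrix.mul_assoc,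
        Matrix.mul_zero]
      abel)
  have hz := MPrim.eq_zero ha hA (B := fun _ => 0) (fun _ _ => by simp) hE (by
    have h0 : matInt (fun t => D t * (X t)ᵀ * L t) a a = 0 := by ext i j; simp [SDEKernels.matInt]
    rw [h0, hXa]
    nth_rw 1 [hMa]
    simp) b hb
  rw [hVb, hSb] at hz
  simpa [sub_eq_zero] using hz

/-- `Π₀^{1/2} (I + Π₀^{1/2} Σ Π₀^{1/2})⁻¹ Π₀^{1/2} (I + Σ Π₀) = Π₀`. -/
lemma sqrt_push_through {Ph S0 : Matrix (Fin n) (Fin n) ℝ} (hPh : Ph.PosSemidef)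
    (hS0 : S0.PosSemidef) :
    Ph * (1 + Ph * S0 * Ph)⁻¹ * Ph * (1 + S0 * (Ph * Ph)) = Ph * Ph := by
  have h1 : (1 + Ph * S0 * Ph).PosDef := by
    have := hS0.conjTranspose_mul_mul_same Ph
    rw [hPh.isHermitian.eq] at this
    exact Matrix.PosDef.one.add_posSemidef this
  have h2 := Matrix.nonsing_inv_mul _ ((Matrix.isUnit_iff_isUnit_det _).1 h1.isUnit)
  have h3 : Ph * (1 + S0 * (Ph * Ph)) = (1 + Ph * S0 * Ph) * Ph := by noncomm_ring
  rw [Matrix.mul_assoc, h3, ← Matrix.mul_assoc, Matrix.mul_assoc Ph, h2, Matrix.mul_one]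

end Decoupling

/-! ### Transition matrices -/

section Transition

variable {n : ℕ} {a b : ℝ} {A : ℝ → Matrix (Fin n) (Fin n) ℝ}
  {Φ : ℝ → ℝ → Matrix (Fin n) (Fin n) ℝ}

lemma transition_self (h : IsTransition a b A Φ) {t : ℝ} (ht : t ∈ Icc a b) : Φ t t = 1 := by
  rw [(h t ht).2.2 t ht]
  ext i j; simp [matInt]

lemma transition_MPrim (h : IsTransition a b A Φ) {t : ℝ} (ht : t ∈ Icc a b) :
    MPrim a b (fun s => Φ s t) (fun s => A s * Φ s t) :=
  MPrim.of_base ht (h t ht).2.1 fun s hs => by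
    rw [transition_self h ht]; exact (h t ht).2.2 s hs

lemma transition_comp (hA : MatII A a b) (h : IsTransition a b A Φ) {s t u : ℝ}
    (hs : s ∈ Icc a b) (ht : t ∈ Icc a b) (hu : u ∈ Icc a b) : Φ s t * Φ t u = Φ s u := by
  have hab : a ≤ b := hs.1.trans hs.2
  have hE := (((transition_MPrim h ht).mul hab (MPrim.const (Φ t u))).sub
    (transition_MPrim h hu)).congr' hab
    (Y' := fun s => A s * (Φ s t * Φ t u - Φ s u) +
      (Φ s t * Φ t u - Φ s u) * (0 : Matrix (Fin n) (Fin n) ℝ)) (by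
      intro x _; noncomm_ring)
  have := MPrim.eq_zero ht hA (B := fun _ => 0) (fun _ _ => by simp) hE
    (by simp [transition_self h ht]) s hs
  exact sub_eq_zero.1 this

lemma transition_mul_inv (hA : MatII A a b) (h : IsTransition a b A Φ) {s t : ℝ}
    (hs : s ∈ Icc a b) (ht : t ∈ Icc a b) : Φ s t * Φ t s = 1 := by
  rw [transition_comp hA h hs ht hs, transition_self h hs]

/-- Continuity in the second argument is not part of `IsTransition`; it follows from
`Φ(t₀,t) = Φ(t,t₀)⁻¹`. -/
lemma transition_contOn_snd (hab : a ≤ b) (hA : MatII A a b) (h : IsTransition a b A Φ) :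
    MatContOn (fun t => Φ a t) (Icc a b) := by
  have ha : a ∈ Icc a b := ⟨le_rfl, hab⟩
  intro i j
  have hX : ContinuousOn (fun t => Φ t a) (Icc a b) :=
    continuousOn_pi.2 fun i => continuousOn_pi.2 fun j => (h a ha).1 i j
  have hd : ∀ t ∈ Icc a b, (Φ t a).det ≠ 0 := fun t ht h0 => by
    have := congrArg Matrix.det (transition_mul_inv hA h ht ha)
    rw [Matrix.det_mul, h0] at this
    simp at this
  have hdc : ContinuousOn (fun t => (Φ t a).det) (Icc a b) :=
    (continuous_id.matrix_det (R := ℝ) (n := Fin n)).comp_continuousOn hX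
  have hac : ContinuousOn (fun t => (Φ t a).adjugate i j) (Icc a b) :=
    ((continuous_id.matrix_adjugate (R := ℝ) (n := Fin n)).matrix_elem i j).comp_continuousOn hX
  refine ((hdc.inv₀ hd).mul hac).congr fun t ht => ?_
  change Φ a t i j = (Φ t a).det⁻¹ * (Φ t a).adjugate i j
  rw [← Matrix.inv_eq_right_inv (transition_mul_inv hA h ht ha)]
  simp [Matrix.inv_def, Ring.inverse_eq_inv']

end Transition

/-! ### Vectors as one-column matrices -/

lemma integral_apply {n : ℕ} {f : ℝ → Fin n → ℝ} {s t : ℝ} (h : IntervalIntegrable f volume s t)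
    (i : Fin n) : (∫ τ in s..t, f τ) i = ∫ τ in s..t, f τ i :=
  ((ContinuousLinearMap.proj (R := ℝ) (φ := fun _ : Fin n => ℝ) i).intervalIntegral_comp_comm
    h).symm

lemma ii_apply {n : ℕ} {f : ℝ → Fin n → ℝ} {s t : ℝ} (h : IntervalIntegrable f volume s t)
    (i : Fin n) : IntervalIntegrable (fun τ => f τ i) volume s t :=
  ⟨h.1.eval i, h.2.eval i⟩

lemma MPrim.of_vec {n : ℕ} {a b c : ℝ} (hc : c ∈ Icc a b) {x f : ℝ → Fin n → ℝ}
    (hf : IntervalIntegrable f volume a b)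
    (h : ∀ t ∈ Icc a b, x t = x c + ∫ τ in c..t, f τ) :
    MPrim a b (fun t => replicateCol (Fin 1) (x t)) (fun t => replicateCol (Fin 1) (f t)) :=
  fun i _ => Prim.of_base hc (ii_apply hf i) fun t ht => by
    have := congrFun (h t ht) i
    rw [Pi.add_apply, integral_apply] at this
    · simpa using this
    · have hab : a ≤ b := hc.1.trans hc.2
      exact hf.mono_set (by rw [uIcc_of_le hab]; exact uIcc_subset_Icc hc ht)

/-- The filtered value: `μ̂(T) = r(T) = ∫ K(T,t|T)H*(t)R(t)⁻¹g(t) dt` (case `ΣT = 0`). -/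
theorem stmt16 {n m d : ℕ} (t0 T r : ℝ) (ht : t0 < T) (hr : 0 < r)
    (F : ℝ → Matrix (Fin n) (Fin n) ℝ) (G : ℝ → Matrix (Fin n) (Fin d) ℝ)
    (Q : ℝ → Matrix (Fin d) (Fin d) ℝ) (H : ℝ → Matrix (Fin m) (Fin n) ℝ)
    (R : ℝ → Matrix (Fin m) (Fin m) ℝ)
    (hF : MatII F t0 T) (hG : MatL2 G t0 T) (hQ : MatII Q t0 T)
    (hQpsd : ∀ t ∈ Icc t0 T, (Q t).PosSemidef) (hH : MatL2 H t0 T) (hR : MatL2 R t0 T)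
    (hRbd : ∀ t ∈ Icc t0 T, (R t - r • (1 : Matrix (Fin m) (Fin m) ℝ)).PosSemidef)
    (P0 : Matrix (Fin n) (Fin n) ℝ) (hP0 : P0.PosSemidef)
    (P0h : Matrix (Fin n) (Fin n) ℝ) (hP0h : P0h.PosSemidef ∧ P0h * P0h = P0)
    (Sg : ℝ → Matrix (Fin n) (Fin n) ℝ) (hSg : SolvesBackRiccati t0 T F G Q H R 0 Sg)
    (Pm : ℝ → Matrix (Fin n) (Fin n) ℝ) (hPm : SolvesFwdRiccati t0 T F G Q H R P0 Pm)
    (PhiFS : ℝ → ℝ → Matrix (Fin n) (Fin n) ℝ)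
    (hPhiFS : IsTransition t0 T (fun τ => F τ - gqg G Q τ * Sg τ) PhiFS)
    (g : ℝ → Fin m → ℝ) (hg : VecL2 g t0 T)
    (μ ν : ℝ → Fin n → ℝ)
    (hμν : SolvesTPBVP t0 T F G Q H R P0 0 (fun _ => 0)
      (fun τ => ((H τ)ᵀ * (R τ)⁻¹).mulVec (g τ)) μ ν)
    (rr : ℝ → Fin n → ℝ) (hrr : SolvesRODE t0 T F H R Pm g rr) :
    μ T = rr T ∧
    rr T = ∫ t in t0..T, (Kker t0 G Q PhiFS Sg P0h T t * (H t)ᵀ * (R t)⁻¹).mulVec (g t) := by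
  have hab : t0 ≤ T := ht.le
  have ha : t0 ∈ Icc t0 T := ⟨le_rfl, hab⟩
  have hb : T ∈ Icc t0 T := ⟨hab, le_rfl⟩
  obtain ⟨hPc, hPI, hPa, hPe⟩ := hPm
  obtain ⟨hSc, hSI, hSb, hSe⟩ := hSg
  obtain ⟨-, -, hμI, hνI, hμe, hνe, hμa, hνb⟩ := hμν
  obtain ⟨-, hrI, hra, hre⟩ := hrr
  have hRpd : ∀ t ∈ Icc t0 T, (R t).PosDef := fun t ht => (inv_entry_bound hr (hRbd t ht)).1
  have hCI : MatII (hrh H R) t0 T := weighted_MatII hab hr hH hH hR hRbd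
  -- `G ∈ L²` and `Q ∈ L¹` alone do not make `G Q G*` integrable; the Riccati equation for `Π` does
  have hBI : MatII (gqg G Q) t0 T := by
    have h := (hPI.sub ((hF.mul_cont hab hPc).add (MatII.cont_mul hab hPc hF.transpose))).add
      ((MatII.cont_mul hab hPc hCI).mul_cont hab hPc)
    exact h.congr hab fun t _ => by abel
  have hBs : ∀ t ∈ Icc t0 T, (gqg G Q t)ᵀ = gqg G Q t := fun t ht => gqg_transpose (hQpsd t ht)
  have hCs : ∀ t ∈ Icc t0 T, (hrh H R t)ᵀ = hrh H R t := fun t ht => hrh_transpose (hRpd t ht)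
  let M : ℝ → Matrix (Fin n) (Fin 1) ℝ := fun t => replicateCol (Fin 1) (μ t)
  let V : ℝ → Matrix (Fin n) (Fin 1) ℝ := fun t => replicateCol (Fin 1) (ν t)
  let rc : ℝ → Matrix (Fin n) (Fin 1) ℝ := fun t => replicateCol (Fin 1) (rr t)
  let L : ℝ → Matrix (Fin n) (Fin 1) ℝ := fun t =>
    (H t)ᵀ * (R t)⁻¹ * replicateCol (Fin 1) (g t)
  have hLI : MatII L t0 T :=
    weighted_MatII (K := fun t => replicateCol (Fin 1) (g t)) hab hr hH (fun i _ => hg i) hR hRbd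
  have hP : MPrim t0 T Pm fun t =>
      F t * Pm t + Pm t * (F t)ᵀ - Pm t * hrh H R t * Pm t + gqg G Q t :=
    MPrim.of_base ha hPI fun t ht => by rw [hPa]; exact hPe t ht
  have hS : MPrim t0 T Sg fun t =>
      -(Sg t * F t + (F t)ᵀ * Sg t - Sg t * gqg G Q t * Sg t + hrh H R t) :=
    MPrim.of_base hb (fun i j => (hSI i j).neg) fun t ht => by
      rw [hSb, hSe t ht]
      congr 1
      ext i j
      simp only [matInt, Matrix.of_apply, Matrix.neg_apply, intervalIntegral.integral_neg]
      rw [intervalIntegral.integral_symm]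
  have hM : MPrim t0 T M fun t => F t * M t - gqg G Q t * V t :=
    (MPrim.of_vec ha hμI hμe).congr' hab fun t _ => by
      simp only [M, V, ← replicateCol_mulVec]
      ext i j; simp
  have hV : MPrim t0 T V fun t => -((F t)ᵀ * V t + hrh H R t * M t - L t) := by
    refine (MPrim.of_vec hb hνI.neg fun t ht => ?_).congr' hab fun t _ => ?_
    · rw [hνe t ht, intervalIntegral.integral_symm]
      congr 1
      exact (intervalIntegral.integral_neg (f := fun τ => (F τ)ᵀ *ᵥ ν τ + hrh H R τ *ᵥ μ τ -
        ((H τ)ᵀ * (R τ)⁻¹) *ᵥ g τ)).symm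
    · simp only [M, V, L, ← replicateCol_mulVec]
      ext i j; simp
  have hrp : MPrim t0 T rc fun t => (F t - Pm t * hrh H R t) * rc t + Pm t * L t := by
    refine (MPrim.of_vec ha hrI fun t ht => ?_).congr' hab fun t _ => ?_
    · rw [hra, zero_add]; exact hre t ht
    · simp only [rc, L, ← replicateCol_mulVec]
      ext i j; simp [Matrix.mul_assoc]
  have hVT : V T = 0 := by
    simp only [V, hνb]; ext i j; simp
  have hMa : M t0 = -(P0 * V t0) := by
    simp only [M, V, hμa, ← replicateCol_mulVec]; ext i j; simp
  have hX := transition_MPrim hPhiFS ha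
  have hX1 := transition_self hPhiFS ha
  have hSs := riccati_symm hab hF hBI hBs hCs hS hSb
  have hS0 : (Sg t0).PosSemidef := riccati_posSemidef hab (fun t ht => gqg_posSemidef (hQpsd t ht))
    (fun t ht => hrh_posSemidef (hRpd t ht)) hS hSb hSs hX hX1
  have hAI : MatII (fun t => F t - gqg G Q t * Sg t) t0 T := hF.sub (hBI.mul_cont hab hSc)
  have hMr : M T = rc T := by
    have := filter_decoupling hab (hF.sub (MatII.cont_mul hab hPc hCI)) hM hV hP hrp
      (by rw [hPa]; exact hMa) (by ext i j; simp [rc, hra]) T hb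
    rw [hVT, Matrix.mul_zero, add_zero] at this
    exact sub_eq_zero.1 this
  have hμr : μ T = rr T := by
    ext i
    exact congrFun (congrFun hMr i) 0
  refine ⟨hμr, ?_⟩
  have hYc := transition_contOn_snd hab hAI hPhiFS
  have hYB : MatII (fun τ => PhiFS t0 τ * gqg G Q τ * (PhiFS t0 τ)ᵀ) t0 T :=
    (MatII.cont_mul hab hYc hBI).mul_cont hab hYc.transpose
  let N : Matrix (Fin n) (Fin n) ℝ := P0h * (1 + P0h * Sg t0 * P0h)⁻¹ * P0h
  let D : ℝ → Matrix (Fin n) (Fin n) ℝ := fun t =>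
    N + matInt (fun τ => PhiFS t0 τ * gqg G Q τ * (PhiFS t0 τ)ᵀ) t0 t
  have hD : MPrim t0 T D fun t => PhiFS t0 t * gqg G Q t * (PhiFS t0 t)ᵀ :=
    ((MPrim.const N).add (MPrim.matInt hab hYB)).congr' hab fun t _ => by simp
  have hD0 : D t0 = N := by
    ext i j; simp [D, matInt]
  have hMad : M t0 = -(D t0 * (V t0 - Sg t0 * M t0)) := by
    have h1 := sqrt_push_through hP0h.1 hS0
    rw [hP0h.2] at h1
    have h2 : V t0 - Sg t0 * M t0 = (1 + Sg t0 * P0) * V t0 := by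
      rw [hMa]
      simp only [Matrix.mul_neg, Matrix.add_mul, Matrix.one_mul, Matrix.mul_assoc]
      abel
    rw [h2, hD0, ← Matrix.mul_assoc, h1, hMa]
  obtain ⟨hJI, hJ⟩ := kernel_decoupling hab hAI hLI hBs hM hV hS hSb hSs hVT hX hX1
    (fun t ht => transition_mul_inv hAI hPhiFS ht ha) hD hMad
  -- by the composition law the kernel factors as `K(T,t) = Φ(T,t₀) D(t) Φ(t,t₀)*`
  have hK : ∀ t ∈ Icc t0 T, Kker t0 G Q PhiFS Sg P0h T t =
      PhiFS T t0 * D t * (PhiFS t t0)ᵀ := by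
    intro t ht
    have hcst := ((MPrim.const (a := t0) (b := T) (PhiFS T t0)).mul hab
      (MPrim.matInt hab hYB)).mul hab (MPrim.const (PhiFS t t0)ᵀ)
    have h1 := (hcst.congr' hab
      (Y' := fun τ => PhiFS T τ * gqg G Q τ * (PhiFS t τ)ᵀ) (by
        intro τ hτ
        rw [← transition_comp hAI hPhiFS hb ha hτ, ← transition_comp hAI hPhiFS ht ha hτ]
        simp only [transpose_mul, Matrix.mul_assoc, Matrix.zero_mul, Matrix.mul_zero, zero_add,
          add_zero])).eq_matInt ha ht
    have h0 : matInt (fun τ => PhiFS t0 τ * gqg G Q τ * (PhiFS t0 τ)ᵀ) t0 t0 = 0 := by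
      ext i j; simp [matInt]
    rw [h0, Matrix.mul_zero, Matrix.zero_mul, zero_add] at h1
    rw [Kker, min_eq_right ht.2, ← h1]
    simp only [D, N, Matrix.mul_add, Matrix.add_mul, Matrix.mul_assoc]
  have hfin := ((MPrim.const (a := t0) (b := T) (PhiFS T t0)).mul hab
    (MPrim.matInt hab hJI)).congr' hab
    (Y' := fun t => replicateCol (Fin 1)
      ((Kker t0 G Q PhiFS Sg P0h T t * (H t)ᵀ * (R t)⁻¹).mulVec (g t))) (by
      intro t ht
      rw [replicateCol_mulVec, hK t ht]
      simp only [L, Matrix.mul_assoc, Matrix.zero_mul, zero_add])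
  have hI : IntervalIntegrable (fun t =>
      (Kker t0 G Q PhiFS Sg P0h T t * (H t)ᵀ * (R t)⁻¹).mulVec (g t)) volume t0 T :=
    ⟨Integrable.of_eval fun i => (hfin i 0).1.1, Integrable.of_eval fun i => (hfin i 0).1.2⟩
  ext i
  rw [integral_apply hI, ← hμr]
  have h1 := (hfin i 0).2 T hb
  have h0 : matInt (fun t => D t * (PhiFS t t0)ᵀ * L t) t0 t0 = 0 := by
    ext i j; simp [matInt]
  simp only [h0, ← hJ, Matrix.mul_zero, Matrix.zero_apply, zero_add] at h1
  exact h1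

end SDEKernels
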